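/- arXiv:math/0509548 — 2 statements merged into one kernel-verified Lean document; each statement's English description precedes it below -/
import Mathlib

section
/- Let Ω ⊆ ℂ be an additive sub-semigroup such that e^{−ω} ≠ 1 for every ω ∈ Ω. The mould Se defined by Se^∅ = 1 and Se^{(ω_1,…,ω_r)} = e^{ω_1+⋯+ω_r} / ∏_{i=1}^{r} (e^{−(ω_1+⋯+ω_i)} − 1) for r ≥ 1 (all partial sums lie in Ω, so the denominators are nonzero) is symétrel: Σ_{w∈csh(u,v)} Se^w = Se^u · Se^v for all words u, v. -/
namespace Moulds

variable {X : Type*} {K : Type*}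

/-- The multiset of shuffles (interleavings) of two words, counted with multiplicity. -/
def shuffles : List X → List X → Multiset (List X)
  | [], v => {v}
  | a :: u, [] => {a :: u}
  | a :: u, b :: v =>
      (shuffles u (b :: v)).map (a :: ·) + (shuffles (a :: u) v).map (b :: ·)
termination_by u v => u.length + v.length

/-- The multiset of contracting shuffles of two words: interleavings in which any
pair of adjacent letters coming one from each word may be contracted to their sum. -/
def cshuffles [Add X] : List X → List X → Multiset (List X)
  | [], v => {v}
  | a :: u, [] => {a :: u}
  | a :: u, b :: v =>
      (cshuffles u (b :: v)).map (a :: ·) + (cshuffles (a :: u) v).map (b :: ·)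
        + (cshuffles u v).map ((a + b) :: ·)
termination_by u v => u.length + v.length

/-- Shuffle sum Σ_{w ∈ sh(u,v)} M^w (with multiplicity). -/
def shuffleSum [AddCommMonoid K] (M : List X → K) (u v : List X) : K :=
  ((shuffles u v).map M).sum

/-- Contracting shuffle sum Σ_{w ∈ csh(u,v)} M^w (with multiplicity). -/
def cshuffleSum [Add X] [AddCommMonoid K] (M : List X → K) (u v : List X) : K :=
  ((cshuffles u v).map M).sum

/-- A mould is alternal if it vanishes on ∅ and all its nontrivial shuffle sums vanish. -/
def Alternal [AddCommMonoid K] (M : List X → K) : Prop :=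
  M [] = 0 ∧ ∀ u v : List X, u ≠ [] → v ≠ [] → shuffleSum M u v = 0

/-- A mould is symétral if M^∅ = 1 and shuffle sums multiply. -/
def Symetral [CommRing K] (M : List X → K) : Prop :=
  M [] = 1 ∧ ∀ u v : List X, shuffleSum M u v = M u * M v

/-- A mould is alternel if it vanishes on ∅ and all its nontrivial contracting
shuffle sums vanish. -/
def Alternel [Add X] [AddCommMonoid K] (M : List X → K) : Prop :=
  M [] = 0 ∧ ∀ u v : List X, u ≠ [] → v ≠ [] → cshuffleSum M u v = 0

/-- A mould is symétrel if M^∅ = 1 and contracting shuffle sums multiply. -/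
def Symetrel [Add X] [CommRing K] (M : List X → K) : Prop :=
  M [] = 1 ∧ ∀ u v : List X, cshuffleSum M u v = M u * M v

/-- Mould multiplication: (M × N)^w = Σ_{w = w¹w²} M^{w¹} N^{w²}. -/
def mmul [CommRing K] (M N : List X → K) : List X → K :=
  fun w => ∑ i ∈ Finset.range (w.length + 1), M (w.take i) * N (w.drop i)

/-- The unit mould 1^•, equal to 1 on the empty word and 0 elsewhere. -/
def mone [One K] [Zero K] : List X → K :=
  fun w => match w with | [] => 1 | _ => 0

/-- The mould I^•, equal to 1 on one-letter words and 0 elsewhere. -/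
def mId [One K] [Zero K] : List X → K :=
  fun w => if w.length = 1 then 1 else 0

/-- All factorizations of a word into nonempty consecutive blocks; a block is
recorded as (first letter, rest of the block). -/
def splits : List X → List (List (X × List X))
  | [] => [[]]
  | a :: t =>
      (splits t).flatMap fun p =>
        match p with
        | [] => [[(a, ([] : List X))]]
        | (b, r) :: ps => [(a, b :: r) :: ps, (a, ([] : List X)) :: (b, r) :: ps]

/-- The sum ‖·‖ of the letters of a (nonempty) block. -/
def blockSum [Add X] (b : X × List X) : X := b.2.foldl (· + ·) b.1

/-- Mould composition:
(M ∘ N)^w = Σ_{w = w¹⋯wˢ, wⁱ ≠ ∅} M^{(‖w¹‖,…,‖wˢ‖)} N^{w¹} ⋯ N^{wˢ}. -/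
def mcomp [Add X] [CommRing K] (M N : List X → K) : List X → K :=
  fun w => ((splits w).map
    (fun p => M (p.map blockSum) * (p.map (fun b => N (b.1 :: b.2))).prod)).sum

/-- The monomial series associated to a word. -/
def mono [DecidableEq X] [One K] [Zero K] (w : List X) : List X → K :=
  fun w' => if w' = w then 1 else 0

end Moulds

namespace Moulds

/- STATEMENT 9: Let Ω ⊆ ℂ be an additive sub-semigroup with e^{−ω} ≠ 1 for all
ω ∈ Ω.  The mould Se with Se^∅ = 1 and
Se^{(ω₁,…,ω_r)} = e^{ω₁+⋯+ω_r} / ∏_{i=1}^r (e^{−(ω₁+⋯+ω_i)} − 1) is symétrel on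
words with letters in Ω. -/

/-- The mould Se^{(ω₁,…,ω_r)} = e^{‖w‖} / ∏_{i=1}^r (e^{−(ω₁+⋯+ω_i)} − 1); for
r = 0 this gives Se^∅ = 1. -/
noncomputable def Semould : List ℂ → ℂ :=
  fun w => Complex.exp w.sum /
    ((List.range w.length).map
      (fun i => Complex.exp (-(w.take (i + 1)).sum) - 1)).prod

/-!
Read from the right, a contracting shuffle of `u ++ [a]` and `v ++ [b]` ends in `a`, `b` or `a + b`.
For a mould of the form `∏ c(ωᵢ) · ∏ g(ω₁ + ⋯ + ωᵢ)` the last letter contributes a factor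
depending only on that letter and on the total sum, which all the shuffles share. With
`s = ‖u‖ + a`, `t = ‖v‖ + b` and `c` multiplicative, the induction step is then precisely the
functional equation `g s * g t = g (s + t) * (g s + g t + 1)`, which `g s = (e⁻ˢ - 1)⁻¹` satisfies.
-/

section ContractingShuffles

variable {X K : Type*}

section Add

variable [Add X]

theorem cshuffles_nil_left (v : List X) : cshuffles [] v = {v} := by
  rw [cshuffles]

theorem cshuffles_nil_right (u : List X) : cshuffles u [] = {u} := by
  cases u <;> rw [cshuffles]

theorem cshuffles_cons_cons (a b : X) (u v : List X) :
    cshuffles (a :: u) (b :: v) =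
      (cshuffles u (b :: v)).map (a :: ·) + (cshuffles (a :: u) v).map (b :: ·)
        + (cshuffles u v).map ((a + b) :: ·) := by
  rw [cshuffles]

theorem cshuffles_concat_concat (u v : List X) (a b : X) :
    cshuffles (u ++ [a]) (v ++ [b]) =
      (cshuffles u (v ++ [b])).map (· ++ [a]) + (cshuffles (u ++ [a]) v).map (· ++ [b])
        + (cshuffles u v).map (· ++ [a + b]) := by
  induction u generalizing v with
  | nil =>
    induction v with
    | nil => simp [cshuffles_cons_cons, cshuffles_nil_left, cshuffles_nil_right, add_comm]
    | cons d v ihv =>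
      simp only [List.nil_append] at ihv
      simp only [List.nil_append, List.cons_append, cshuffles_cons_cons, cshuffles_nil_left, ihv,
        Multiset.map_add, Multiset.map_map, Function.comp_def, Multiset.map_singleton]
      ac_rfl
  | cons c u ihu =>
    induction v with
    | nil =>
      have ihu_nil := ihu []
      simp only [List.nil_append] at ihu_nil
      simp only [List.nil_append, List.cons_append, cshuffles_cons_cons, cshuffles_nil_right,
        ihu_nil, Multiset.map_add, Multiset.map_map, Function.comp_def, Multiset.map_singleton]
      ac_rfl
    | cons d v ihv =>
      have ihu_cons := ihu (d :: v)
      simp only [List.cons_append] at ihu_cons ihv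
      simp only [List.cons_append, cshuffles_cons_cons, ihu_cons, ihv, ihu v,
        Multiset.map_add, Multiset.map_map, Function.comp_def]
      ac_rfl

variable [AddCommMonoid K]

theorem cshuffleSum_nil_left (M : List X → K) (v : List X) : cshuffleSum M [] v = M v := by
  simp [cshuffleSum, cshuffles_nil_left]

theorem cshuffleSum_nil_right (M : List X → K) (u : List X) : cshuffleSum M u [] = M u := by
  simp [cshuffleSum, cshuffles_nil_right]

theorem cshuffleSum_concat_concat (M : List X → K) (u v : List X) (a b : X) :
    cshuffleSum M (u ++ [a]) (v ++ [b]) =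
      cshuffleSum (fun w => M (w ++ [a])) u (v ++ [b])
        + cshuffleSum (fun w => M (w ++ [b])) (u ++ [a]) v
        + cshuffleSum (fun w => M (w ++ [a + b])) u v := by
  simp only [cshuffleSum, cshuffles_concat_concat, Multiset.map_add, Multiset.map_map,
    Function.comp_def, Multiset.sum_add]

end Add

theorem sum_of_mem_cshuffles [AddCommMonoid X] {u v w : List X} (hw : w ∈ cshuffles u v) :
    w.sum = u.sum + v.sum := by
  induction u, v using cshuffles.induct generalizing w with
  | case1 v =>
    obtain rfl : w = v := by simpa [cshuffles_nil_left] using hw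
    simp
  | case2 a u =>
    obtain rfl : w = a :: u := by simpa [cshuffles_nil_right] using hw
    simp
  | case3 a u b v ihu ihv ihuv =>
    simp only [cshuffles_cons_cons, Multiset.mem_add, Multiset.mem_map] at hw
    rcases hw with (⟨w, hw, rfl⟩ | ⟨w, hw, rfl⟩) | ⟨w, hw, rfl⟩
    · simp only [List.sum_cons, ihu hw, add_assoc]
    · simp only [List.sum_cons, ihv hw, add_left_comm]
    · simp only [List.sum_cons, ihuv hw, add_add_add_comm]

end ContractingShuffles

theorem list_sum_mem_of_ne_nil {X : Type*} [AddMonoid X] (S : AddSubsemigroup X)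
    {w : List X} (hw : w ≠ []) (hS : ∀ x ∈ w, x ∈ S) : w.sum ∈ S :=
  List.sum_induction_nonempty (· ∈ S) (fun _ _ => S.add_mem) hw hS

section PrefixSumMould

variable {X K : Type*}

section Recursion

variable [AddMonoid X] [CommMonoid K]

/-- The mould `w ↦ ∏ᵢ c(ωᵢ) · ∏ᵢ g(ω₁ + ⋯ + ωᵢ)` for `w = (ω₁, …, ω_r)`: each letter carries
a weight `c` and each nonempty prefix a weight `g` depending on its sum. It is the general form of
`Semould`. -/
def prefixSumMould (c g : X → K) (w : List X) : K :=
  (w.map c).prod * ((List.range w.length).map fun i => g (w.take (i + 1)).sum).prod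

theorem prefixSumMould_nil (c g : X → K) : prefixSumMould c g [] = 1 := by
  simp [prefixSumMould]

theorem prefixSumMould_concat (c g : X → K) (w : List X) (a : X) :
    prefixSumMould c g (w ++ [a]) = c a * g (w.sum + a) * prefixSumMould c g w := by
  have prefixes_of_w :
      (List.range w.length).map (fun i => g ((w ++ [a]).take (i + 1)).sum) =
        (List.range w.length).map fun i => g (w.take (i + 1)).sum := by
    refine List.map_congr_left fun i hi => ?_
    rw [List.take_append_of_le_length (by simpa using hi)]
  have full_prefix : (w ++ [a]).take (w.length + 1) = w ++ [a] :=
    List.take_of_length_le (by simp)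
  simp only [prefixSumMould, List.map_append, List.prod_append, List.map_singleton,
    List.prod_singleton, List.length_append, List.length_singleton, List.range_succ,
    prefixes_of_w, full_prefix, List.sum_append, List.sum_singleton]
  ac_rfl

end Recursion

variable [AddCommMonoid X] [CommSemiring K]

theorem cshuffleSum_prefixSumMould_concat (c g : X → K) (u v : List X) (a : X) :
    cshuffleSum (fun w => prefixSumMould c g (w ++ [a])) u v =
      c a * g (u.sum + v.sum + a) * cshuffleSum (prefixSumMould c g) u v := by
  rw [cshuffleSum, cshuffleSum, ← Multiset.sum_map_mul_left]
  refine congrArg Multiset.sum (Multiset.map_congr rfl fun w hw => ?_)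
  rw [prefixSumMould_concat, sum_of_mem_cshuffles hw]

theorem cshuffleSum_prefixSumMould_concat_concat (c g : X → K) (u v : List X) (a b : X) :
    cshuffleSum (prefixSumMould c g) (u ++ [a]) (v ++ [b]) =
      g ((u.sum + a) + (v.sum + b)) *
        (c a * cshuffleSum (prefixSumMould c g) u (v ++ [b])
          + c b * cshuffleSum (prefixSumMould c g) (u ++ [a]) v
          + c (a + b) * cshuffleSum (prefixSumMould c g) u v) := by
  have total_a : u.sum + (v ++ [b]).sum + a = (u.sum + a) + (v.sum + b) := by
    rw [List.sum_append, List.sum_singleton, add_right_comm]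
  have total_b : (u ++ [a]).sum + v.sum + b = (u.sum + a) + (v.sum + b) := by
    rw [List.sum_append, List.sum_singleton, add_assoc]
  have total_ab : u.sum + v.sum + (a + b) = (u.sum + a) + (v.sum + b) := add_add_add_comm ..
  simp only [cshuffleSum_concat_concat, cshuffleSum_prefixSumMould_concat,
    total_a, total_b, total_ab]
  ring

theorem Semould_symetrel_general (S : AddSubsemigroup X) {c g : X → K}
    (hc : ∀ a ∈ S, ∀ b ∈ S, c (a + b) = c a * c b)
    (hg : ∀ s ∈ S, ∀ t ∈ S, g s * g t = g (s + t) * (g s + g t + 1)) :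
    prefixSumMould c g [] = 1 ∧
      ∀ u v : List X, (∀ x ∈ u, x ∈ S) → (∀ x ∈ v, x ∈ S) →
        cshuffleSum (prefixSumMould c g) u v = prefixSumMould c g u * prefixSumMould c g v := by
  refine ⟨prefixSumMould_nil c g, fun u v hu hv => ?_⟩
  induction u using List.reverseRecOn generalizing v with
  | nil => rw [cshuffleSum_nil_left, prefixSumMould_nil, one_mul]
  | append_singleton u a ihu =>
    induction v using List.reverseRecOn with
    | nil => rw [cshuffleSum_nil_right, prefixSumMould_nil, mul_one]
    | append_singleton v b ihv =>
      have hu_init : ∀ x ∈ u, x ∈ S := fun x hx => hu x (List.mem_append_left _ hx)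
      have hv_init : ∀ x ∈ v, x ∈ S := fun x hx => hv x (List.mem_append_left _ hx)
      have hs : u.sum + a ∈ S := by
        simpa using list_sum_mem_of_ne_nil S (List.concat_ne_nil a u) hu
      have ht : v.sum + b ∈ S := by
        simpa using list_sum_mem_of_ne_nil S (List.concat_ne_nil b v) hv
      have c_add : c (a + b) = c a * c b := hc a (hu a (by simp)) b (hv b (by simp))
      rw [cshuffleSum_prefixSumMould_concat_concat, ihu _ hu_init hv, ihv hv_init,
        ihu _ hu_init hv_init, prefixSumMould_concat, prefixSumMould_concat, c_add]
      set Mu := prefixSumMould c g u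
      set Mv := prefixSumMould c g v
      set s := u.sum + a
      set t := v.sum + b
      calc g (s + t) * (c a * (Mu * (c b * g t * Mv)) + c b * (c a * g s * Mu * Mv)
            + c a * c b * (Mu * Mv))
          = g (s + t) * (g s + g t + 1) * (c a * c b * Mu * Mv) := by ring
        _ = g s * g t * (c a * c b * Mu * Mv) := by rw [hg s hs t ht]
        _ = c a * g s * Mu * (c b * g t * Mv) := by ring

end PrefixSumMould

theorem inv_sub_one_mul_inv_sub_one {K : Type*} [Field K] {x y : K} (hx : x ≠ 1) (hy : y ≠ 1)
    (hxy : x * y ≠ 1) :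
    (x - 1)⁻¹ * (y - 1)⁻¹ = (x * y - 1)⁻¹ * ((x - 1)⁻¹ + (y - 1)⁻¹ + 1) := by
  have hx_sub : x - 1 ≠ 0 := sub_ne_zero.mpr hx
  have hy_sub : y - 1 ≠ 0 := sub_ne_zero.mpr hy
  have hxy_sub : x * y - 1 ≠ 0 := sub_ne_zero.mpr hxy
  field_simp
  ring

theorem exp_neg_sub_one_inv_mul {s t : ℂ} (hs : Complex.exp (-s) ≠ 1)
    (ht : Complex.exp (-t) ≠ 1) (hst : Complex.exp (-(s + t)) ≠ 1) :
    (Complex.exp (-s) - 1)⁻¹ * (Complex.exp (-t) - 1)⁻¹ =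
      (Complex.exp (-(s + t)) - 1)⁻¹ *
        ((Complex.exp (-s) - 1)⁻¹ + (Complex.exp (-t) - 1)⁻¹ + 1) := by
  rw [neg_add, Complex.exp_add] at hst ⊢
  exact inv_sub_one_mul_inv_sub_one hs ht hst

theorem Semould_eq_prefixSumMould :
    Semould = prefixSumMould Complex.exp fun s => (Complex.exp (-s) - 1)⁻¹ := by
  funext w
  simp only [Semould, prefixSumMould, div_eq_mul_inv, Complex.exp_list_sum, List.prod_inv,
    List.map_map, Function.comp_def]

theorem Semould_symetrel (Ω : Set ℂ)
    (hadd : ∀ a ∈ Ω, ∀ b ∈ Ω, a + b ∈ Ω)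
    (hω : ∀ ω ∈ Ω, Complex.exp (-ω) ≠ 1) :
    Semould [] = 1 ∧
      ∀ u v : List ℂ, (∀ x ∈ u, x ∈ Ω) → (∀ x ∈ v, x ∈ Ω) →
        cshuffleSum Semould u v = Semould u * Semould v := by
  rw [Semould_eq_prefixSumMould]
  exact Semould_symetrel_general ⟨Ω, fun {a b} ha hb => hadd a ha b hb⟩
    (fun a _ b _ => Complex.exp_add a b) fun s hs t ht =>
      exp_neg_sub_one_inv_mul (hω s hs) (hω t ht) (hω (s + t) (hadd s hs t ht))

end Moulds
end

section
/- Let K be a field of characteristic zero and Ω a commutative semigroup. Then: (i) the product M × N of two symétral moulds is symétral, and the multiplicative inverse of a symétral mould is symétral; (ii) if B is a symétral mould and C an alternal mould, then B × C × B^{−1} is alternal; (iii) the composition C ∘ E of two alternal moulds is alternal. -/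
namespace Moulds

/- STATEMENT 13: Over a field K of characteristic zero and a commutative semigroup Ω:
(i) the product of two symétral moulds is symétral and the multiplicative inverse of
a symétral mould is symétral; (ii) if B is symétral and C alternal then
B × C × B⁻¹ is alternal; (iii) the composition of two alternal moulds is alternal. -/

variable {Ω : Type*} [AddCommSemigroup Ω] {K : Type*} [Field K] [CharZero K]

/-!
Summing a mould over shuffles is dual to the shuffle product, and because shuffling is compatible
with deconcatenation it is a ring homomorphism `Δ` from moulds to moulds in two words. A symétral
mould is a group-like element, `Δ M = M ⊗ M`, and an alternal one is a primitive element,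
`Δ M = M ⊗ 1 + 1 ⊗ M`, so products, inverses and conjugates are handled by algebra.
For the composition `C ∘ E` with `E` alternal, shuffle two words and then cut them into blocks:
the blocks mixing letters of both words contribute shuffle sums of `E`, weighted by a coefficient
that depends only on the sum of the letters, and hence cancel. What remains is `Δ C` evaluated on
separate factorizations of the two words, and it vanishes when `C` is alternal.
-/

section Deconcatenation

variable {X R : Type*}

/-- The sum of `F x y` over all factorizations `w = x ++ y` of a word into two, possibly empty,
words: the pairing of `F` with the deconcatenation coproduct of `w`. -/
def deconcSum [AddCommMonoid R] (F : List X → List X → R) (w : List X) : R :=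
  ∑ i ∈ Finset.range (w.length + 1), F (w.take i) (w.drop i)

section AddCommMonoid

variable [AddCommMonoid R]

lemma deconcSum_nil (F : List X → List X → R) : deconcSum F [] = F [] [] := by
  simp [deconcSum]

lemma deconcSum_cons (F : List X → List X → R) (a : X) (w : List X) :
    deconcSum F (a :: w) = F [] (a :: w) + deconcSum (fun x y => F (a :: x) y) w := by
  rw [deconcSum, List.length_cons, Finset.sum_range_succ', add_comm]
  simp [deconcSum]

lemma deconcSum_congr {F G : List X → List X → R} {w : List X}
    (h : ∀ x y, x ++ y = w → F x y = G x y) : deconcSum F w = deconcSum G w :=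
  Finset.sum_congr rfl fun i _ => h _ _ (List.take_append_drop i w)

lemma deconcSum_zero (w : List X) : deconcSum (fun _ _ => (0 : R)) w = 0 :=
  Finset.sum_const_zero

lemma deconcSum_add (F G : List X → List X → R) (w : List X) :
    deconcSum (fun x y => F x y + G x y) w = deconcSum F w + deconcSum G w :=
  Finset.sum_add_distrib

lemma deconcSum_comm (F : List X → List X → List X → List X → R) (u v : List X) :
    deconcSum (fun x y => deconcSum (F x y) v) u =
      deconcSum (fun p q => deconcSum (fun x y => F x y p q) u) v :=
  Finset.sum_comm

lemma deconcSum_apply {Y : Type*} (F : List X → List X → Y → R) (w : List X) (y : Y) :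
    deconcSum F w y = deconcSum (fun x z => F x z y) w :=
  Finset.sum_apply y _ _

lemma deconcSum_assoc (F : List X → List X → List X → R) (w : List X) :
    deconcSum (fun xy z => deconcSum (fun x y => F x y z) xy) w =
      deconcSum (fun x yz => deconcSum (F x) yz) w := by
  induction w generalizing F with
  | nil => simp only [deconcSum_nil]
  | cons a w ih => simp only [deconcSum_cons, deconcSum_nil, deconcSum_add, ih, add_assoc]

end AddCommMonoid

section NonUnitalNonAssocSemiring

variable [NonUnitalNonAssocSemiring R]

lemma mul_deconcSum (c : R) (F : List X → List X → R) (w : List X) :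
    c * deconcSum F w = deconcSum (fun x y => c * F x y) w :=
  Finset.mul_sum _ _ _

lemma deconcSum_mul (F : List X → List X → R) (w : List X) (c : R) :
    deconcSum F w * c = deconcSum (fun x y => F x y * c) w :=
  Finset.sum_mul _ _ _

end NonUnitalNonAssocSemiring

end Deconcatenation

section Shuffle

variable {X R : Type*}

lemma perm_append_of_mem_shuffles {u v w : List X} (hw : w ∈ shuffles u v) :
    w.Perm (u ++ v) := by
  induction u, v using shuffles.induct generalizing w with
  | case1 v => simp_all [shuffles]
  | case2 a u => simp_all [shuffles]
  | case3 a u b v ih_left ih_right =>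
    simp only [shuffles, Multiset.mem_add, Multiset.mem_map] at hw
    obtain ⟨x, hx, rfl⟩ | ⟨x, hx, rfl⟩ := hw
    · exact (ih_left hx).cons a
    · exact ((ih_right hx).cons b).trans List.perm_middle.symm

section AddCommMonoid

variable [AddCommMonoid R]

lemma shuffleSum_nil_left (M : List X → R) : shuffleSum M [] = M := by
  funext v
  simp [shuffleSum, shuffles]

lemma shuffleSum_nil_right (M : List X → R) (u : List X) : shuffleSum M u [] = M u := by
  cases u <;> simp [shuffleSum, shuffles]

lemma shuffleSum_cons_cons (M : List X → R) (a b : X) (u v : List X) :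
    shuffleSum M (a :: u) (b :: v) =
      shuffleSum (fun w => M (a :: w)) u (b :: v) +
        shuffleSum (fun w => M (b :: w)) (a :: u) v := by
  simp [shuffleSum, shuffles]

lemma shuffleSum_congr {M N : List X → R} {u v : List X}
    (h : ∀ w, w.Perm (u ++ v) → M w = N w) : shuffleSum M u v = shuffleSum N u v :=
  congrArg Multiset.sum <|
    Multiset.map_congr rfl fun w hw => h w (perm_append_of_mem_shuffles hw)

lemma shuffleSum_zero (u v : List X) : shuffleSum (fun _ => (0 : R)) u v = 0 :=
  Multiset.sum_map_zero

lemma shuffleSum_add (M N : List X → R) (u v : List X) :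
    shuffleSum (fun w => M w + N w) u v = shuffleSum M u v + shuffleSum N u v :=
  Multiset.sum_map_add

lemma shuffleSum_mone_cons_cons [One R] (a b : X) (u v : List X) :
    shuffleSum (mone : List X → R) (a :: u) (b :: v) = 0 := by
  simp only [shuffleSum_cons_cons, mone, shuffleSum_zero, add_zero]

/-- Deconcatenation is a morphism for the shuffle product. -/
lemma shuffleSum_deconcSum (F : List X → List X → R) (u v : List X) :
    shuffleSum (deconcSum F) u v =
      deconcSum (fun u₁ u₂ => deconcSum (fun v₁ v₂ =>
        shuffleSum (fun w => shuffleSum (F w) u₂ v₂) u₁ v₁) v) u := by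
  induction u, v using shuffles.induct generalizing F with
  | case1 v => simp only [deconcSum_nil, shuffleSum_nil_left]
  | case2 a u => simp only [deconcSum_nil, shuffleSum_nil_right]
  | case3 a u b v ih_left ih_right =>
    rw [shuffleSum_cons_cons]
    simp only [deconcSum_cons F, shuffleSum_add, ih_left, ih_right]
    simp only [deconcSum_cons, shuffleSum_cons_cons, shuffleSum_nil_left, shuffleSum_nil_right,
      deconcSum_add]
    abel

end AddCommMonoid

section NonUnitalNonAssocSemiring

variable [NonUnitalNonAssocSemiring R]

lemma shuffleSum_mul_left (c : R) (M : List X → R) (u v : List X) :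
    shuffleSum (fun w => c * M w) u v = c * shuffleSum M u v :=
  Multiset.sum_map_mul_left

lemma shuffleSum_mul_right (M : List X → R) (c : R) (u v : List X) :
    shuffleSum (fun w => M w * c) u v = shuffleSum M u v * c :=
  Multiset.sum_map_mul_right

lemma shuffleSum_deconcSum_mul (M N : List X → R) (u v : List X) :
    shuffleSum (deconcSum fun x y => M x * N y) u v =
      deconcSum (fun u₁ u₂ => deconcSum (fun v₁ v₂ =>
        shuffleSum M u₁ v₁ * shuffleSum N u₂ v₂) v) u := by
  simp only [shuffleSum_deconcSum, shuffleSum_mul_left, shuffleSum_mul_right]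

end NonUnitalNonAssocSemiring

end Shuffle

/-- Moulds as a type of their own, a semiring with product `mmul` and unit `mone`. The values need
not commute, so that a mould in two words is a mould with values in moulds. -/
def Mould (X R : Type*) : Type _ := List X → R

namespace Mould

variable {X R : Type*}

section Semiring

variable [Semiring R]

instance : AddCommMonoid (Mould X R) := inferInstanceAs (AddCommMonoid (List X → R))

instance : One (Mould X R) := ⟨mone⟩

instance : Mul (Mould X R) := ⟨fun M N => deconcSum fun x y => M x * N y⟩

lemma add_apply (M N : Mould X R) (w : List X) : (M + N) w = M w + N w := rfl

lemma one_nil : (1 : Mould X R) [] = 1 := rfl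

lemma one_cons (a : X) (w : List X) : (1 : Mould X R) (a :: w) = 0 := rfl

lemma mul_apply (M N : Mould X R) (w : List X) :
    (M * N) w = deconcSum (fun x y => M x * N y) w := rfl

lemma mul_nil (M N : Mould X R) : (M * N) [] = M [] * N [] := deconcSum_nil _

protected lemma one_mul (M : Mould X R) : 1 * M = M := by
  funext w
  cases w <;>
    simp only [mul_apply, deconcSum_nil, deconcSum_cons, one_nil, one_cons, _root_.one_mul,
      zero_mul, deconcSum_zero, add_zero]

protected lemma mul_one (M : Mould X R) : M * 1 = M := by
  funext w
  induction w generalizing M with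
  | nil => rw [mul_nil, one_nil, _root_.mul_one]
  | cons a w ih =>
    rw [mul_apply, deconcSum_cons, one_cons, mul_zero, zero_add]
    exact ih fun w => M (a :: w)

protected lemma mul_assoc (M N P : Mould X R) : M * N * P = M * (N * P) := by
  funext w
  simp only [mul_apply, deconcSum_mul, mul_deconcSum, _root_.mul_assoc]
  exact deconcSum_assoc (fun x y z => M x * (N y * P z)) w

instance : Semiring (Mould X R) where
  left_distrib M N P := by
    funext w
    simp only [mul_apply, add_apply, mul_add, deconcSum_add]
  right_distrib M N P := by
    funext w
    simp only [mul_apply, add_apply, add_mul, deconcSum_add]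
  zero_mul M := by
    funext w
    exact (deconcSum_congr fun x y _ => zero_mul (M y)).trans (deconcSum_zero w)
  mul_zero M := by
    funext w
    exact (deconcSum_congr fun x y _ => mul_zero (M x)).trans (deconcSum_zero w)
  mul_assoc := Mould.mul_assoc
  one_mul := Mould.one_mul
  mul_one := Mould.mul_one

lemma mul_apply_apply (P Q : Mould X (Mould X R)) (u v : List X) :
    (P * Q) u v =
      deconcSum (fun u₁ u₂ => deconcSum (fun v₁ v₂ => P u₁ v₁ * Q u₂ v₂) v) u :=
  deconcSum_apply (fun u₁ u₂ => P u₁ * Q u₂) u v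

/-- The tensor product of two moulds, as a mould in two words. -/
def tensor (M N : Mould X R) : Mould X (Mould X R) := fun u v => M u * N v

lemma tensor_apply (M N : Mould X R) (u v : List X) : tensor M N u v = M u * N v := rfl

lemma tensor_one_one : tensor 1 1 = (1 : Mould X (Mould X R)) := by
  funext u v
  cases u
  · exact _root_.one_mul _
  · exact zero_mul _

/-- The ring homomorphism dual to the shuffle product, sending a mould to the mould in two words
formed by its shuffle sums. -/
def coproduct : Mould X R →+* Mould X (Mould X R) where
  toFun M := shuffleSum M
  map_zero' := by
    funext u v
    exact shuffleSum_zero u v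
  map_add' M N := by
    funext u v
    exact shuffleSum_add M N u v
  map_one' := by
    funext u v
    rw [← tensor_one_one, tensor_apply]
    rcases u with _ | ⟨a, u⟩
    · exact (congrFun (shuffleSum_nil_left mone) v).trans (_root_.one_mul _).symm
    rcases v with _ | ⟨b, v⟩
    · exact (shuffleSum_nil_right mone (a :: u)).trans (_root_.mul_one _).symm
    · exact (shuffleSum_mone_cons_cons a b u v).trans (mul_zero _).symm
  map_mul' M N := by
    funext u v
    exact (shuffleSum_deconcSum_mul M N u v).trans
      (mul_apply_apply (shuffleSum M) (shuffleSum N) u v).symm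

lemma coproduct_nil_left (M : Mould X R) (v : List X) : coproduct M [] v = M v :=
  congrFun (shuffleSum_nil_left M) v

lemma coproduct_nil_right (M : Mould X R) (u : List X) : coproduct M u [] = M u :=
  shuffleSum_nil_right M u

end Semiring

lemma tensor_mul_tensor [CommSemiring R] (M N P Q : Mould X R) :
    tensor M N * tensor P Q = tensor (M * P) (N * Q) := by
  funext u v
  simp only [mul_apply_apply, tensor_apply, mul_apply, deconcSum_mul]
  simp only [mul_deconcSum]
  exact deconcSum_congr fun _ _ _ => deconcSum_congr fun _ _ _ => mul_mul_mul_comm _ _ _ _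

lemma symetral_iff_coproduct_eq [CommRing R] (M : Mould X R) :
    Symetral M ↔ M [] = 1 ∧ coproduct M = tensor M M :=
  and_congr_right fun _ => ⟨fun h => funext₂ h, fun h u v => congrFun₂ h u v⟩

lemma alternal_iff_coproduct_eq [Ring R] (M : Mould X R) :
    Alternal M ↔ coproduct M = tensor M 1 + tensor 1 M := by
  have tensor_add (u v : List X) : (tensor M 1 + tensor 1 M) u v =
      M u * (1 : Mould X R) v + (1 : Mould X R) u * M v := rfl
  constructor
  · rintro ⟨hM_nil, hM⟩
    funext u v
    rw [tensor_add]
    rcases u with _ | ⟨a, u⟩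
    · simp [coproduct_nil_left, one_nil, hM_nil]
    rcases v with _ | ⟨b, v⟩
    · simp [coproduct_nil_right, one_nil, hM_nil]
    · exact (hM (a :: u) (b :: v) (by simp) (by simp)).trans (by simp [one_cons])
  · intro h
    have hM (u v : List X) : coproduct M u v = _ := (congrFun₂ h u v).trans (tensor_add u v)
    refine ⟨by simpa [coproduct_nil_left, one_nil] using hM [] [], fun u v hu hv => ?_⟩
    obtain ⟨a, u, rfl⟩ := List.exists_cons_of_ne_nil hu
    obtain ⟨b, v, rfl⟩ := List.exists_cons_of_ne_nil hv
    exact (hM (a :: u) (b :: v)).trans (by simp [one_cons])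

end Mould

section Product

variable {X R : Type*} [CommRing R]

open Mould

lemma Symetral.mul {A B : Mould X R} (hA : Symetral A) (hB : Symetral B) :
    Symetral (A * B) := by
  rw [symetral_iff_coproduct_eq] at *
  exact ⟨by rw [mul_nil, hA.1, hB.1, mul_one], by rw [map_mul, hA.2, hB.2, tensor_mul_tensor]⟩

lemma Symetral.inverse {B B' : Mould X R} (hB : Symetral B) (hBB' : B * B' = 1)
    (hB'B : B' * B = 1) : Symetral B' := by
  rw [symetral_iff_coproduct_eq] at *
  refine ⟨by simpa [mul_nil, one_nil, hB.1] using congrFun hBB' [], ?_⟩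
  have left_inv : coproduct B' * coproduct B = 1 := by rw [← map_mul, hB'B, map_one]
  have right_inv : coproduct B * tensor B' B' = 1 := by
    rw [hB.2, tensor_mul_tensor, hBB', tensor_one_one]
  exact left_inv_eq_right_inv left_inv right_inv

lemma Alternal.conj {B B' C : Mould X R} (hC : Alternal C) (hB : Symetral B)
    (hBB' : B * B' = 1) (hB'B : B' * B = 1) : Alternal (B * C * B') := by
  have hB' := hB.inverse hBB' hB'B
  rw [symetral_iff_coproduct_eq] at hB hB'
  rw [alternal_iff_coproduct_eq] at *
  calc coproduct (B * C * B')
      = tensor B B * (tensor C 1 + tensor 1 C) * tensor B' B' := by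
        rw [map_mul, map_mul, hB.2, hC, hB'.2]
    _ = tensor (B * C * B') (B * B') + tensor (B * B') (B * C * B') := by
        simp only [mul_add, add_mul, tensor_mul_tensor, mul_one]
    _ = tensor (B * C * B') 1 + tensor 1 (B * C * B') := by rw [hBB']

end Product

section Composition

variable {X R : Type*}

lemma sum_map_splits_cons [AddCommMonoid R] (a : X) (t : List X)
    (g : List (X × List X) → R) :
    ((splits (a :: t)).map g).sum =
      deconcSum (fun x y => ((splits y).map fun p => g ((a, x) :: p)).sum) t := by
  induction t generalizing a g with
  | nil => simp [splits, deconcSum_nil]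
  | cons b t ih =>
    have attach_or_cut : ((splits (a :: b :: t)).map g).sum =
        ((splits (b :: t)).map fun p => match p with
          | [] => g [(a, [])]
          | (c, r) :: ps => g ((a, c :: r) :: ps) + g ((a, []) :: (c, r) :: ps)).sum := by
      rw [splits, List.flatMap_def, List.map_flatten, List.sum_flatten]
      simp only [List.map_map]
      refine congrArg List.sum (List.map_congr_left fun p _ => ?_)
      rcases p with _ | ⟨⟨c, r⟩, ps⟩ <;> simp
    rw [attach_or_cut, ih, deconcSum_cons, ih]
    simp only [List.sum_map_add, deconcSum_add]
    exact add_comm _ _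

section CommRing

variable [Add X] [CommRing R]

lemma mcomp_nil (C E : List X → R) : mcomp C E [] = C [] := by
  simp [mcomp, splits]

lemma mcomp_cons (C E : List X → R) (a : X) (t : List X) :
    mcomp C E (a :: t) =
      deconcSum (fun x y => E (a :: x) * mcomp (fun w => C (blockSum (a, x) :: w)) E y) t := by
  simp only [mcomp, sum_map_splits_cons, List.map_cons, List.prod_cons, mul_left_comm (C _),
    List.sum_map_mul_left]

/-- Composition with `E`, evaluated at `w`, is linear in the outer mould. -/
def mcompLinear (E : List X → R) (w : List X) : (List X → R) →ₗ[R] R where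
  toFun C := mcomp C E w
  map_add' C D := by simp only [mcomp, Pi.add_apply, add_mul, List.sum_map_add]
  map_smul' c C := by
    simp only [mcomp, Pi.smul_apply, smul_eq_mul, mul_assoc, List.sum_map_mul_left,
      RingHom.id_apply]

lemma mcomp_zero (E : List X → R) (w : List X) : mcomp (fun _ => 0) E w = 0 :=
  map_zero (mcompLinear E w)

lemma mcomp_add (C D E : List X → R) (w : List X) :
    mcomp (fun x => C x + D x) E w = mcomp C E w + mcomp D E w :=
  map_add (mcompLinear E w) C D

lemma mcomp_mul_left (c : R) (C E : List X → R) (w : List X) :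
    mcomp (fun x => c * C x) E w = c * mcomp C E w :=
  map_smul (mcompLinear E w) c C

lemma mcomp_deconcSum (F : List X → List X → List X → R) (E : List X → R) (v w : List X) :
    mcomp (fun p => deconcSum (fun x y => F x y p) v) E w =
      deconcSum (fun x y => mcomp (F x y) E w) v := by
  rw [← funext (deconcSum_apply F v)]
  exact map_sum (mcompLinear E w) _ _

/-- Composition of a mould `P` in two words with the mould `E` in each of them. -/
def bicomp (P : List X → List X → R) (E : List X → R) (u v : List X) : R :=
  mcomp (fun p => mcomp (P p) E v) E u

lemma bicomp_nil_left (P : List X → List X → R) (E : List X → R) (v : List X) :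
    bicomp P E [] v = mcomp (P []) E v :=
  mcomp_nil _ _

lemma bicomp_nil_right (P : List X → List X → R) (E : List X → R) (u : List X) :
    bicomp P E u [] = mcomp (fun p => P p []) E u := by
  simp only [bicomp, mcomp_nil]

lemma bicomp_shuffleSum_cons_cons (C E : List X → R) (a b : X) (u v : List X) :
    bicomp (shuffleSum C) E (a :: u) (b :: v) =
      deconcSum (fun x y => E (a :: x) *
        bicomp (shuffleSum fun w => C (blockSum (a, x) :: w)) E y (b :: v)) u +
      deconcSum (fun x y => E (b :: x) *
        bicomp (shuffleSum fun w => C (blockSum (b, x) :: w)) E (a :: u) y) v := by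
  simp only [bicomp, mcomp_cons, shuffleSum_cons_cons, mcomp_add, mul_add, deconcSum_add,
    mcomp_deconcSum, mcomp_mul_left, mul_deconcSum]
  congr 1
  rw [deconcSum_comm]
  exact deconcSum_congr fun _ _ _ => deconcSum_congr fun _ _ _ => mul_left_comm _ _ _

/-- The summand, as a function of the first block `x` and the remaining word `y`, of the sum over
factorizations defining `mcomp C E (x ++ y)`. The empty word has no first block, and accounts for
the value at `x = []`. -/
def firstBlockTerm (C E : List X → R) : List X → List X → R
  | [] => fun y => C [] * mone y
  | a :: x => fun y => E (a :: x) * mcomp (fun w => C (blockSum (a, x) :: w)) E y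

lemma mcomp_eq_deconcSum (C E : List X → R) : mcomp C E = deconcSum (firstBlockTerm C E) := by
  funext w
  cases w <;>
    simp only [mcomp_nil, mcomp_cons, deconcSum_nil, deconcSum_cons, firstBlockTerm, mone, mul_one,
      mul_zero, zero_add]

end CommRing

lemma coe_blockSum [AddSemigroup X] (b : X × List X) :
    ((blockSum b : X) : WithZero X) = ((b.1 :: b.2).map ((↑) : X → WithZero X)).sum := by
  obtain ⟨a, t⟩ := b
  induction t generalizing a with
  | nil => simp [blockSum]
  | cons c t ih =>
    calc ((blockSum (a + c, t) : X) : WithZero X)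
        = (((a + c) :: t).map ((↑) : X → WithZero X)).sum := ih (a + c)
      _ = ((a :: c :: t).map ((↑) : X → WithZero X)).sum := by
        simp only [List.map_cons, List.sum_cons, WithZero.coe_add, add_assoc]

section AddCommSemigroup

variable [AddCommSemigroup X]

lemma blockSum_eq_of_perm {a b : X} {s t : List X} (h : (a :: s).Perm (b :: t)) :
    blockSum (a, s) = blockSum (b, t) := by
  apply WithZero.coe_injective
  rw [coe_blockSum, coe_blockSum, (h.map _).sum_eq]

variable [CommRing R] {E : List X → R}

lemma shuffleSum_firstBlockTerm_eq_zero (hE : Alternal E) (C : List X → R) (a b : X)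
    (x y u v : List X) :
    shuffleSum (fun w => shuffleSum (firstBlockTerm C E w) u v) (a :: x) (b :: y) = 0 := by
  -- The sum of the letters of the first block does not depend on how they are shuffled.
  have constant_coeff (w : List X) (hw : w.Perm (a :: x ++ b :: y)) :
      shuffleSum (firstBlockTerm C E w) u v = E w *
        shuffleSum (mcomp (fun p => C (blockSum (a, x ++ b :: y) :: p)) E) u v := by
    obtain ⟨c, w, rfl⟩ := List.exists_cons_of_ne_nil (show w ≠ [] by rintro rfl; simp at hw)
    have hsum : blockSum (a, x ++ b :: y) = blockSum (c, w) := (blockSum_eq_of_perm hw).symm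
    rw [hsum]
    exact shuffleSum_mul_left _ _ u v
  rw [shuffleSum_congr constant_coeff, shuffleSum_mul_right,
    hE.2 (a :: x) (b :: y) (by simp) (by simp), zero_mul]

lemma shuffleSum_mcomp_cons_cons (hE : Alternal E) (C : List X → R) (a b : X) (u v : List X) :
    shuffleSum (mcomp C E) (a :: u) (b :: v) =
      deconcSum (fun x y => E (a :: x) *
        shuffleSum (mcomp (fun w => C (blockSum (a, x) :: w)) E) y (b :: v)) u +
      deconcSum (fun x y => E (b :: x) *
        shuffleSum (mcomp (fun w => C (blockSum (b, x) :: w)) E) (a :: u) y) v := by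
  rw [mcomp_eq_deconcSum, shuffleSum_deconcSum]
  simp only [deconcSum_cons, shuffleSum_nil_left, shuffleSum_nil_right,
    shuffleSum_firstBlockTerm_eq_zero hE, deconcSum_zero, add_zero]
  simp only [firstBlockTerm, shuffleSum_mul_left, shuffleSum_mone_cons_cons, mul_zero, zero_add]
  exact add_comm _ _

theorem shuffleSum_mcomp (hE : Alternal E) (C : List X → R) (u v : List X) :
    shuffleSum (mcomp C E) u v = bicomp (shuffleSum C) E u v := by
  induction hn : u.length + v.length using Nat.strong_induction_on generalizing C u v with
  | _ n ih =>
  rcases u with _ | ⟨a, u⟩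
  · simp only [shuffleSum_nil_left, bicomp_nil_left]
  rcases v with _ | ⟨b, v⟩
  · simp only [shuffleSum_nil_right, bicomp_nil_right]
  rw [shuffleSum_mcomp_cons_cons hE, bicomp_shuffleSum_cons_cons]
  congr 1 <;>
  · refine deconcSum_congr fun x y hxy => congrArg _ (ih _ ?_ _ _ _ rfl)
    subst hxy
    simp only [List.length_cons, List.length_append] at hn ⊢
    omega

theorem Alternal.mcomp {C : List X → R} (hC : Alternal C) (hE : Alternal E) :
    Alternal (mcomp C E) := by
  refine ⟨(mcomp_nil C E).trans hC.1, fun u v hu hv => ?_⟩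
  obtain ⟨a, u, rfl⟩ := List.exists_cons_of_ne_nil hu
  obtain ⟨b, v, rfl⟩ := List.exists_cons_of_ne_nil hv
  have hC_cons (c d : X) (p q : List X) : shuffleSum C (c :: p) (d :: q) = 0 :=
    hC.2 _ _ (List.cons_ne_nil _ _) (List.cons_ne_nil _ _)
  simp only [shuffleSum_mcomp hE, bicomp, mcomp_cons, hC_cons, mcomp_zero, mul_zero,
    deconcSum_zero]

end AddCommSemigroup

end Composition

theorem mould_symmetry_stability_general {R : Type*} [CommRing R] :
    (∀ A B : List Ω → R, Symetral A → Symetral B → Symetral (mmul A B)) ∧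
    (∀ B Binv : List Ω → R, Symetral B →
        mmul B Binv = mone → mmul Binv B = mone → Symetral Binv) ∧
    (∀ B Binv C : List Ω → R, Symetral B →
        mmul B Binv = mone → mmul Binv B = mone → Alternal C →
        Alternal (mmul (mmul B C) Binv)) ∧
    (∀ C E : List Ω → R, Alternal C → Alternal E → Alternal (mcomp C E)) :=
  ⟨fun _ _ hA hB => hA.mul hB,
    fun _ _ hB hBB' hB'B => hB.inverse hBB' hB'B,
    fun _ _ _ hB hBB' hB'B hC => hC.conj hB hBB' hB'B,
    fun _ _ hC hE => hC.mcomp hE⟩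

theorem mould_symmetry_stability :
    (∀ A B : List Ω → K, Symetral A → Symetral B → Symetral (mmul A B)) ∧
    (∀ B Binv : List Ω → K, Symetral B →
        mmul B Binv = mone → mmul Binv B = mone → Symetral Binv) ∧
    (∀ B Binv C : List Ω → K, Symetral B →
        mmul B Binv = mone → mmul Binv B = mone → Alternal C →
        Alternal (mmul (mmul B C) Binv)) ∧
    (∀ C E : List Ω → K, Alternal C → Alternal E → Alternal (mcomp C E)) :=
  mould_symmetry_stability_general

end Moulds
end
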